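/- Let k ≥ 1, let F₁,…,F_m be k-labeled finite simple graphs and let a₁,…,a_m ∈ ℝ. Then there exist finite simple graphs G₁,…,G_s and real numbers b₁,…,b_s such that for every W ∈ 𝒲: Σ_{j=1}^s b_j t(G_j,W) = 0 if and only if Σ_{i=1}^m a_i t^k(F_i,W)(x) = 0 for almost every x ∈ [0,1]^k. -/

import Mathlib

open MeasureTheory
open scoped Classical

noncomputable section

/-- The unit interval `[0,1]` as a subset of `ℝ`. -/
def I01 : Set ℝ := Set.Icc 0 1

/-- The cube `[0,1]^n`. -/
def cube (n : ℕ) : Set (Fin n → ℝ) := Set.univ.pi fun _ => I01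

/-- `W` belongs to `𝒲`: a bounded symmetric measurable function on `[0,1]²`. -/
def memW (W : ℝ → ℝ → ℝ) : Prop :=
  Measurable (Function.uncurry W) ∧
  (∀ x ∈ I01, ∀ y ∈ I01, W x y = W y x) ∧
  ∃ C : ℝ, ∀ x ∈ I01, ∀ y ∈ I01, |W x y| ≤ C

/-- `W` belongs to `𝒲₀`: a graphon, i.e. symmetric measurable with values in `[0,1]`. -/
def memW0 (W : ℝ → ℝ → ℝ) : Prop :=
  Measurable (Function.uncurry W) ∧
  (∀ x ∈ I01, ∀ y ∈ I01, W x y = W y x) ∧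
  ∀ x ∈ I01, ∀ y ∈ I01, W x y ∈ Set.Icc (0 : ℝ) 1

/-- Homomorphism density `t(F,W)` of a finite simple graph `F` in `W`. -/
def homDensity {n : ℕ} (F : SimpleGraph (Fin n)) (W : ℝ → ℝ → ℝ) : ℝ :=
  ∫ x in cube n,
    ∏ p ∈ Finset.univ.filter (fun p : Fin n × Fin n => p.1 < p.2 ∧ F.Adj p.1 p.2),
      W (x p.1) (x p.2)

/-- Two kernels are weakly isomorphic if all their homomorphism densities agree. -/
def WeaklyIsomorphic (U W : ℝ → ℝ → ℝ) : Prop :=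
  ∀ (n : ℕ) (F : SimpleGraph (Fin n)), homDensity F U = homDensity F W

/-- `W` is finitely forcible within the class `A`. -/
def FinitelyForcible (A : (ℝ → ℝ → ℝ) → Prop) (W : ℝ → ℝ → ℝ) : Prop :=
  A W ∧ ∃ (k : ℕ) (n : Fin k → ℕ) (F : ∀ i, SimpleGraph (Fin (n i))),
    ∀ U, A U → (∀ i, homDensity (F i) U = homDensity (F i) W) → WeaklyIsomorphic U W

/-- Density function `t^k(F,W)` of a `k`-labeled graph, as a function of the
labeled variables; the graph has `k` labeled and `m` unlabeled vertices. -/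
def labDensity {k m : ℕ} (F : SimpleGraph (Fin (k + m))) (W : ℝ → ℝ → ℝ)
    (x : Fin k → ℝ) : ℝ :=
  ∫ y in cube m,
    ∏ p ∈ Finset.univ.filter
        (fun p : Fin (k + m) × Fin (k + m) => p.1 < p.2 ∧ F.Adj p.1 p.2),
      W (Fin.append x y p.1) (Fin.append x y p.2)

/-! Let `f : Ω^S → ℝ` be the density function of a labeled quantum graph, and color the labels so
that labels adjacent in one of the graphs get different colors. Split the labels as `L ⊕ Z` with `Z`
a color class. Then `f = 0` almost everywhere if and only if
`(w, w') ↦ ∫ z, f (w, z) * f (w', z)` is zero almost everywhere: if the latter function vanishes,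
integrating it over `A × A` gives `∫ z, (∫ w in A, f (w, z)) ^ 2 = 0` for every measurable `A`, so
`f` has integral zero over all rectangles. The new function is the density function of a quantum
graph with label set `L ⊕ L`, obtained by gluing pairs of constituents along `Z`. As no edge joins
two labels of `Z`, gluing creates no multiple edges, and coloring both copies of `L` as before uses
one color less. After one step for each color no labels remain, and the density function is a single
number, a linear combination of homomorphism densities of simple graphs. -/

universe u v w

/-- A bounded measurable real function. The functions integrated here are of this kind, and the
class is closed under products and partial integration, which keeps integrability routine. -/
structure BddMeasurable {X : Type*} [MeasurableSpace X] (f : X → ℝ) : Prop where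
  measurable : Measurable f
  exists_abs_le : ∃ C, ∀ x, |f x| ≤ C

namespace BddMeasurable

variable {X Y ι : Type*} [MeasurableSpace X] [MeasurableSpace Y] {f g : X → ℝ}

theorem integrable {μ : Measure X} [IsFiniteMeasure μ] (hf : BddMeasurable f) : Integrable f μ :=
  let ⟨C, hC⟩ := hf.exists_abs_le
  .of_bound hf.measurable.aestronglyMeasurable C (.of_forall hC)

theorem comp (hf : BddMeasurable f) {φ : Y → X} (hφ : Measurable φ) :
    BddMeasurable fun y => f (φ y) :=
  ⟨hf.measurable.comp hφ, hf.exists_abs_le.imp fun _ hC y => hC (φ y)⟩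

theorem const_mul (c : ℝ) (hf : BddMeasurable f) : BddMeasurable fun x => c * f x := by
  obtain ⟨C, hC⟩ := hf.exists_abs_le
  refine ⟨hf.measurable.const_mul c, |c| * C, fun x => ?_⟩
  rw [abs_mul]
  gcongr
  exact hC x

theorem mul (hf : BddMeasurable f) (hg : BddMeasurable g) : BddMeasurable fun x => f x * g x := by
  obtain ⟨C, hC⟩ := hf.exists_abs_le
  obtain ⟨D, hD⟩ := hg.exists_abs_le
  refine ⟨hf.measurable.mul hg.measurable, C * D, fun x => ?_⟩
  rw [abs_mul]
  exact mul_le_mul (hC x) (hD x) (abs_nonneg _) ((abs_nonneg _).trans (hC x))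

theorem finsetSum {s : Finset ι} {f : ι → X → ℝ} (hf : ∀ i ∈ s, BddMeasurable (f i)) :
    BddMeasurable fun x => ∑ i ∈ s, f i x := by
  refine ⟨Finset.measurable_fun_sum s fun i hi => (hf i hi).measurable, ?_⟩
  choose! C hC using fun i hi => (hf i hi).exists_abs_le
  exact ⟨∑ i ∈ s, C i, fun x =>
    (Finset.abs_sum_le_sum_abs _ _).trans (Finset.sum_le_sum fun i hi => hC i hi x)⟩

theorem finsetProd {s : Finset ι} {f : ι → X → ℝ} (hf : ∀ i ∈ s, BddMeasurable (f i)) :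
    BddMeasurable fun x => ∏ i ∈ s, f i x := by
  refine ⟨Finset.measurable_fun_prod s fun i hi => (hf i hi).measurable, ?_⟩
  choose! C hC using fun i hi => (hf i hi).exists_abs_le
  refine ⟨∏ i ∈ s, C i, fun x => ?_⟩
  rw [Finset.abs_prod]
  exact Finset.prod_le_prod (fun _ _ => abs_nonneg _) fun i hi => hC i hi x

theorem integral_right {f : X × Y → ℝ} (hf : BddMeasurable f) (ν : Measure Y)
    [IsFiniteMeasure ν] : BddMeasurable fun x => ∫ y, f (x, y) ∂ν := by
  obtain ⟨C, hC⟩ := hf.exists_abs_le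
  exact ⟨hf.measurable.stronglyMeasurable.integral_prod_right'.measurable, C * ν.real Set.univ,
    fun x => norm_integral_le_of_norm_le_const (f := fun y => f (x, y))
      (.of_forall fun y => hC (x, y))⟩

end BddMeasurable

section Gram

variable {X Z E : Type*} [MeasurableSpace X] [MeasurableSpace Z]
  [NormedAddCommGroup E] [NormedSpace ℝ E] [CompleteSpace E] {μ : Measure X} {ν : Measure Z}

theorem ae_eq_zero_of_forall_setIntegral_prod_eq_zero [IsFiniteMeasure μ] [IsFiniteMeasure ν]
    {f : X × Z → E} (hf : Integrable f (μ.prod ν))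
    (h : ∀ A B, MeasurableSet A → MeasurableSet B → ∫ q in A ×ˢ B, f q ∂μ.prod ν = 0) :
    f =ᵐ[μ.prod ν] 0 := by
  refine hf.ae_eq_zero_of_forall_setIntegral_eq_zero fun s hs _ => ?_
  induction s, hs using
    MeasurableSpace.induction_on_inter generateFrom_prod.symm isPiSystem_prod with
  | empty => simp
  | basic t ht =>
    obtain ⟨A, hA, B, hB, rfl⟩ := ht
    exact h A B hA hB
  | compl t ht ih =>
    have hadd := integral_add_compl ht hf
    have huniv := h Set.univ Set.univ .univ .univ
    rw [Set.univ_prod_univ, setIntegral_univ] at huniv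
    rwa [ih (measure_lt_top _ _), zero_add, huniv] at hadd
  | iUnion g hdisj hg ih =>
    rw [integral_iUnion hg hdisj hf.integrableOn]
    simp [fun i => ih i (measure_lt_top _ _)]

variable [IsFiniteMeasure μ] [IsFiniteMeasure ν] {f : X × Z → ℝ}

theorem ae_integral_eq_zero_of_ae_integral_mul_eq_zero (hf : BddMeasurable f)
    (h : ∀ᵐ p ∂μ.prod μ, ∫ z, f (p.1, z) * f (p.2, z) ∂ν = 0) :
    ∀ᵐ z ∂ν, ∫ x, f (x, z) ∂μ = 0 := by
  have hmarginal : BddMeasurable fun z => ∫ x, f (x, z) ∂μ :=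
    (hf.comp (φ := fun q : Z × X => (q.2, q.1)) (by fun_prop)).integral_right μ
  have hprod : BddMeasurable fun q : Z × (X × X) => f (q.2.1, q.1) * f (q.2.2, q.1) :=
    (hf.comp (by fun_prop)).mul (hf.comp (by fun_prop))
  have hsq : ∫ z, (∫ x, f (x, z) ∂μ) * ∫ x, f (x, z) ∂μ ∂ν = 0 :=
    calc
      _ = ∫ z, ∫ p, f (p.1, z) * f (p.2, z) ∂μ.prod μ ∂ν :=
        integral_congr_ae <| .of_forall fun z =>
          (integral_prod_mul (fun x => f (x, z)) fun x => f (x, z)).symm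
      _ = ∫ p, ∫ z, f (p.1, z) * f (p.2, z) ∂ν ∂μ.prod μ := integral_integral_swap hprod.integrable
      _ = 0 := integral_eq_zero_of_ae h
  rw [integral_eq_zero_iff_of_nonneg (fun z => mul_self_nonneg _)
    (hmarginal.mul hmarginal).integrable] at hsq
  filter_upwards [hsq] with z hz using mul_self_eq_zero.1 hz

theorem ae_integral_mul_eq_zero_iff (hf : BddMeasurable f) :
    (∀ᵐ p ∂μ.prod μ, ∫ z, f (p.1, z) * f (p.2, z) ∂ν = 0) ↔ ∀ᵐ q ∂μ.prod ν, f q = 0 := by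
  constructor
  · intro h
    refine ae_eq_zero_of_forall_setIntegral_prod_eq_zero hf.integrable fun A B _ _ => ?_
    rw [← Measure.prod_restrict, integral_prod_symm f hf.integrable]
    have hA : ∀ᵐ p ∂(μ.restrict A).prod (μ.restrict A),
        ∫ z, f (p.1, z) * f (p.2, z) ∂ν = 0 := by
      rw [Measure.prod_restrict]
      exact ae_restrict_of_ae h
    exact integral_eq_zero_of_ae
      (ae_restrict_of_ae (ae_integral_eq_zero_of_ae_integral_mul_eq_zero hf hA))
  · intro h
    filter_upwards [Measure.quasiMeasurePreserving_fst.ae (Measure.ae_ae_of_ae_prod h)] with p hp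
    refine integral_eq_zero_of_ae ?_
    filter_upwards [hp] with z hz
    simp [hz]

end Gram

section Pi

variable {Ω A B : Type*} [MeasurableSpace Ω]

theorem measurable_sumElim_pair :
    Measurable fun q : (A → Ω) × (B → Ω) => Sum.elim q.1 q.2 := by
  rw [measurable_pi_iff]
  rintro (i | i) <;> simp only [Sum.elim_inl, Sum.elim_inr] <;> fun_prop

variable [Fintype A] [Fintype B] (μ : Measure Ω) [SigmaFinite μ]

theorem integral_pi_sum {E : Type*} [NormedAddCommGroup E] [NormedSpace ℝ E]
    (f : (A ⊕ B → Ω) → E) :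
    ∫ y, f y ∂Measure.pi (fun _ => μ) =
      ∫ q, f (Sum.elim q.1 q.2) ∂(Measure.pi fun _ : A => μ).prod (Measure.pi fun _ : B => μ) := by
  rw [← (measurePreserving_sumPiEquivProdPi_symm fun _ : A ⊕ B => μ).integral_comp']
  rfl

theorem ae_pi_sum_iff {p : (A ⊕ B → Ω) → Prop} :
    (∀ᵐ y ∂Measure.pi fun _ => μ, p y) ↔
      ∀ᵐ q ∂(Measure.pi fun _ : A => μ).prod (Measure.pi fun _ : B => μ),
        p (Sum.elim q.1 q.2) := by
  rw [← (measurePreserving_sumPiEquivProdPi_symm fun _ : A ⊕ B => μ).map_eq,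
    (MeasurableEquiv.measurableEmbedding _).ae_map_iff]
  rfl

theorem measurePreserving_arrowCongr_refl (e : A ≃ B) :
    MeasurePreserving (MeasurableEquiv.arrowCongr' e (.refl Ω)) (Measure.pi fun _ => μ)
      (Measure.pi fun _ => μ) :=
  measurePreserving_arrowCongr' (fun _ => μ) (fun _ => μ) e (.refl Ω) fun _ => .id μ

theorem integral_pi_comp_equiv {E : Type*} [NormedAddCommGroup E] [NormedSpace ℝ E] (e : A ≃ B)
    (f : (A → Ω) → E) :
    ∫ x, f (x ∘ e) ∂Measure.pi (fun _ => μ) = ∫ y, f y ∂Measure.pi fun _ => μ :=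
  (measurePreserving_arrowCongr_refl μ e.symm).integral_comp' f

theorem ae_pi_comp_equiv_iff (e : A ≃ B) {p : (A → Ω) → Prop} :
    (∀ᵐ x ∂Measure.pi fun _ => μ, p (x ∘ e)) ↔ ∀ᵐ y ∂Measure.pi fun _ => μ, p y := by
  rw [← (measurePreserving_arrowCongr_refl μ e.symm).map_eq,
    (MeasurableEquiv.measurableEmbedding _).ae_map_iff]
  rfl

end Pi

section EdgeProd

variable {Ω V V' : Type*}

theorem measurable_sym2Map_apply [MeasurableSpace Ω] (e : Sym2 V) :
    Measurable fun x : V → Ω => e.map x := by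
  induction e with | _ i j
  exact measurable_quot_mk.comp ((measurable_pi_apply i).prodMk (measurable_pi_apply j))

variable [Fintype V] [Fintype V']

/-- The weight `∏ W(x_i, x_j)`, over the edges `ij` of `G`, of a map `x` from the vertices of `G`
to the domain of the kernel `W`. Making `W` a function of unordered pairs builds its symmetry into
the type, so that no orientation of the edges is needed. -/
def edgeProd (W : Sym2 Ω → ℝ) (G : SimpleGraph V) (x : V → Ω) : ℝ :=
  ∏ e ∈ G.edgeFinset, W (e.map x)

theorem edgeProd_map (W : Sym2 Ω → ℝ) (G : SimpleGraph V) {f : V → V'}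
    (hf : Function.Injective f) (x : V' → Ω) : edgeProd W (G.map f) x = edgeProd W G (x ∘ f) := by
  lift f to V ↪ V' using hf
  calc
    _ = ∏ e ∈ G.edgeFinset.map f.sym2Map, W (e.map x) :=
      Finset.prod_congr (by convert SimpleGraph.edgeFinset_map f G) fun _ _ => rfl
    _ = _ := by simp [edgeProd, Sym2.map_map]

theorem edgeProd_sup (W : Sym2 Ω → ℝ) {G H : SimpleGraph V} (hGH : Disjoint G H) (x : V → Ω) :
    edgeProd W (G ⊔ H) x = edgeProd W G x * edgeProd W H x := by
  simp only [edgeProd, SimpleGraph.edgeFinset_sup]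
  exact Finset.prod_union (SimpleGraph.disjoint_edgeFinset.2 hGH)

theorem edgeProd_eq_prod_lt [LinearOrder V] (W : Sym2 Ω → ℝ) (G : SimpleGraph V) (x : V → Ω) :
    edgeProd W G x = ∏ p : V × V with p.1 < p.2 ∧ G.Adj p.1 p.2, W s(x p.1, x p.2) := by
  refine (Finset.prod_nbij (fun p : V × V => s(p.1, p.2)) ?_ ?_ ?_ fun _ _ => rfl).symm
  · rintro ⟨i, j⟩ hij
    simpa using (Finset.mem_filter.1 hij).2.2
  · rintro ⟨i, j⟩ hij ⟨i', j'⟩ hij' h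
    simp only [Finset.coe_filter, Finset.mem_univ, true_and, Set.mem_ofPred_eq] at hij hij'
    rcases Sym2.eq_iff.1 h with ⟨rfl, rfl⟩ | ⟨rfl, rfl⟩
    · rfl
    · exact absurd hij.1 hij'.1.asymm
  · intro e he
    induction e with | _ i j
    have hij : G.Adj i j := by simpa using he
    rcases hij.ne.lt_or_gt with hlt | hlt
    · exact ⟨(i, j), by simpa using ⟨hlt, hij⟩, rfl⟩
    · exact ⟨(j, i), by simpa using ⟨hlt, hij.symm⟩, Sym2.eq_swap⟩

variable [MeasurableSpace Ω]

theorem bddMeasurable_edgeProd {W : Sym2 Ω → ℝ} (hW : BddMeasurable W) (G : SimpleGraph V) :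
    BddMeasurable (edgeProd W G) :=
  .finsetProd fun e _ => hW.comp (measurable_sym2Map_apply e)

end EdgeProd

section Density

variable {Ω : Type*} [MeasurableSpace Ω] (μ : Measure Ω) (W : Sym2 Ω → ℝ)
  {S T U V : Type*} [Fintype S] [Fintype T] [Fintype U] [Fintype V]

/-- The homomorphism density `t(G, W)` over the measure space `(Ω, μ)`. -/
def density (G : SimpleGraph V) : ℝ :=
  ∫ x, edgeProd W G x ∂Measure.pi fun _ => μ

/-- The density function of a graph with labeled vertices `S` and unlabeled vertices `U`, that is
`t^k(G, W)` over `(Ω, μ)` when `S` has `k` elements. -/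
def labeledDensity (G : SimpleGraph (S ⊕ U)) (x : S → Ω) : ℝ :=
  ∫ y, edgeProd W G (Sum.elim x y) ∂Measure.pi fun _ => μ

theorem labeledDensity_map_sumCongr (e : S ≃ T) (G : SimpleGraph (S ⊕ U)) (x : T → Ω) :
    labeledDensity μ W (G.map (e.sumCongr (.refl U))) x =
      labeledDensity μ W G (x ∘ e) := by
  have hcomp (y : U → Ω) : Sum.elim x y ∘ e.sumCongr (.refl U) = Sum.elim (x ∘ e) y := by
    ext (_ | _) <;> rfl
  simp only [labeledDensity, edgeProd_map _ _ (Equiv.injective _), hcomp]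

theorem labeledDensity_eq_density_map [SigmaFinite μ] [IsEmpty S] (e : S ⊕ U ≃ V)
    (G : SimpleGraph (S ⊕ U)) (x : S → Ω) :
    labeledDensity μ W G x = density μ W (G.map e) := by
  simp only [labeledDensity, density, edgeProd_map _ _ e.injective]
  rw [← integral_pi_comp_equiv μ ((Equiv.emptySum S U).symm.trans e)]
  refine integral_congr_ae (.of_forall fun y => congrArg (edgeProd W G) ?_)
  ext (s | u)
  · exact isEmptyElim s
  · simp

variable {W}

theorem bddMeasurable_labeledDensity [IsFiniteMeasure μ] (hW : BddMeasurable W)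
    (G : SimpleGraph (S ⊕ U)) : BddMeasurable (labeledDensity μ W G) :=
  ((bddMeasurable_edgeProd hW G).comp measurable_sumElim_pair).integral_right _

end Density

section Glue

variable {L Z U₁ U₂ : Type*}

/-- The vertices of the first factor inside `glue G₁ G₂`. -/
def glueLeft : (L ⊕ Z) ⊕ U₁ → (L ⊕ L) ⊕ (Z ⊕ (U₁ ⊕ U₂)) :=
  Sum.elim (Sum.map .inl .inl) (.inr ∘ .inr ∘ .inl)

/-- The vertices of the second factor inside `glue G₁ G₂`. -/
def glueRight : (L ⊕ Z) ⊕ U₂ → (L ⊕ L) ⊕ (Z ⊕ (U₁ ⊕ U₂)) :=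
  Sum.elim (Sum.map .inr .inl) (.inr ∘ .inr ∘ .inr)

theorem glueLeft_injective :
    Function.Injective (glueLeft (L := L) (Z := Z) (U₁ := U₁) (U₂ := U₂)) := by
  rintro ((_ | _) | _) ((_ | _) | _) <;> simp [glueLeft]

theorem glueRight_injective :
    Function.Injective (glueRight (L := L) (Z := Z) (U₁ := U₁) (U₂ := U₂)) := by
  rintro ((_ | _) | _) ((_ | _) | _) <;> simp [glueRight]

/-- The gluing of two graphs with labels in `L ⊕ Z` along the labels in `Z`, which become
unlabeled, while the labels in `L` are kept in two copies. -/
def glue (G₁ : SimpleGraph ((L ⊕ Z) ⊕ U₁)) (G₂ : SimpleGraph ((L ⊕ Z) ⊕ U₂)) :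
    SimpleGraph ((L ⊕ L) ⊕ (Z ⊕ (U₁ ⊕ U₂))) :=
  G₁.map glueLeft ⊔ G₂.map glueRight

theorem sumElim_comp_glueLeft {Ω : Type*} (w : L ⊕ L → Ω) (z : Z → Ω) (y₁ : U₁ → Ω)
    (y₂ : U₂ → Ω) :
    Sum.elim w (Sum.elim z (Sum.elim y₁ y₂)) ∘ glueLeft =
      Sum.elim (Sum.elim (w ∘ Sum.inl) z) y₁ := by
  ext ((_ | _) | _) <;> rfl

theorem sumElim_comp_glueRight {Ω : Type*} (w : L ⊕ L → Ω) (z : Z → Ω) (y₁ : U₁ → Ω)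
    (y₂ : U₂ → Ω) :
    Sum.elim w (Sum.elim z (Sum.elim y₁ y₂)) ∘ glueRight =
      Sum.elim (Sum.elim (w ∘ Sum.inr) z) y₂ := by
  ext ((_ | _) | _) <;> rfl

theorem exists_eq_inl_inr_of_glueLeft_eq_glueRight {a : (L ⊕ Z) ⊕ U₁} {b : (L ⊕ Z) ⊕ U₂}
    (h : (glueLeft a : (L ⊕ L) ⊕ (Z ⊕ (U₁ ⊕ U₂))) = glueRight b) :
    ∃ z, a = .inl (.inr z) := by
  rcases a with (_ | z) | _ <;> rcases b with (_ | _) | _ <;>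
    simp_all [glueLeft, glueRight]

theorem disjoint_map_glueLeft_map_glueRight {G₁ : SimpleGraph ((L ⊕ Z) ⊕ U₁)}
    (hG₁ : ∀ z z', ¬ G₁.Adj (.inl (.inr z)) (.inl (.inr z')))
    (G₂ : SimpleGraph ((L ⊕ Z) ⊕ U₂)) : Disjoint (G₁.map glueLeft) (G₂.map glueRight) := by
  rw [SimpleGraph.disjoint_left]
  intro u v hleft hright
  obtain ⟨-, a, b, hab, rfl, rfl⟩ := hleft
  obtain ⟨-, c, d, -, hca, hdb⟩ := hright
  obtain ⟨z, rfl⟩ := exists_eq_inl_inr_of_glueLeft_eq_glueRight hca.symm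
  obtain ⟨z', rfl⟩ := exists_eq_inl_inr_of_glueLeft_eq_glueRight hdb.symm
  exact hG₁ z z' hab

theorem adj_of_glue_adj_inl {G₁ : SimpleGraph ((L ⊕ Z) ⊕ U₁)}
    {G₂ : SimpleGraph ((L ⊕ Z) ⊕ U₂)} {v w : L ⊕ L} (h : (glue G₁ G₂).Adj (.inl v) (.inl w)) :
    G₁.Adj (.inl (.inl (v.elim id id))) (.inl (.inl (w.elim id id))) ∨
      G₂.Adj (.inl (.inl (v.elim id id))) (.inl (.inl (w.elim id id))) := by
  rcases h with ⟨-, a, b, hab, ha, hb⟩ | ⟨-, a, b, hab, ha, hb⟩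
  · left
    rcases a with (_ | _) | _ <;> rcases b with (_ | _) | _ <;> cases ha <;> cases hb
    exact hab
  · right
    rcases a with (_ | _) | _ <;> rcases b with (_ | _) | _ <;> cases ha <;> cases hb
    exact hab

variable {Ω : Type*} [MeasurableSpace Ω] (μ : Measure Ω) [IsFiniteMeasure μ] {W : Sym2 Ω → ℝ}
  [Fintype L] [Fintype Z] [Fintype U₁] [Fintype U₂]

theorem labeledDensity_glue (hW : BddMeasurable W) {G₁ : SimpleGraph ((L ⊕ Z) ⊕ U₁)}
    (hG₁ : ∀ z z', ¬ G₁.Adj (.inl (.inr z)) (.inl (.inr z')))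
    (G₂ : SimpleGraph ((L ⊕ Z) ⊕ U₂)) (w : L ⊕ L → Ω) :
    labeledDensity μ W (glue G₁ G₂) w =
      ∫ z, labeledDensity μ W G₁ (Sum.elim (w ∘ Sum.inl) z) *
        labeledDensity μ W G₂ (Sum.elim (w ∘ Sum.inr) z) ∂Measure.pi fun _ => μ := by
  have hint : BddMeasurable fun q : (Z → Ω) × (U₁ ⊕ U₂ → Ω) =>
      edgeProd W (glue G₁ G₂) (Sum.elim w (Sum.elim q.1 q.2)) :=
    (bddMeasurable_edgeProd hW _).comp
      (measurable_sumElim_pair.comp (measurable_const.prodMk measurable_sumElim_pair))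
  rw [labeledDensity, integral_pi_sum, integral_prod _ hint.integrable]
  refine integral_congr_ae (.of_forall fun z => ?_)
  simp only [glue, edgeProd_sup W (disjoint_map_glueLeft_map_glueRight hG₁ G₂),
    edgeProd_map _ _ glueLeft_injective, edgeProd_map _ _ glueRight_injective,
    integral_pi_sum, sumElim_comp_glueLeft, sumElim_comp_glueRight]
  exact integral_prod_mul (fun y => edgeProd W G₁ (Sum.elim (Sum.elim (w ∘ Sum.inl) z) y))
    fun y => edgeProd W G₂ (Sum.elim (Sum.elim (w ∘ Sum.inr) z) y)

end Glue

section LabelGraph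

variable {S T L Z ι : Type*} {U : ι → Type*}

/-- The simple graph on the set of labels `S` in which two labels are adjacent if they are adjacent
in some graph of the family `F`. -/
def labelGraph (F : ∀ i, SimpleGraph (S ⊕ U i)) : SimpleGraph S :=
  ⨆ i, (F i).comap Sum.inl

theorem labelGraph_adj {F : ∀ i, SimpleGraph (S ⊕ U i)} {v w : S} :
    (labelGraph F).Adj v w ↔ ∃ i, (F i).Adj (.inl v) (.inl w) := by
  simp [labelGraph]

theorem labelGraph_map_sumCongr (e : S ≃ T) (F : ∀ i, SimpleGraph (S ⊕ U i)) :
    labelGraph (fun i => (F i).map (e.sumCongr (.refl (U i)))) = (labelGraph F).comap e.symm := by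
  ext v w
  have hmap (i : ι) : (F i).map (e.sumCongr (.refl (U i))) =
      (F i).comap (e.sumCongr (.refl (U i))).symm :=
    (SimpleGraph.comap_symm (F i) (e.sumCongr (.refl (U i)))).symm
  simp [labelGraph_adj, hmap]

theorem adj_of_labelGraph_glue_adj {F : ∀ i, SimpleGraph ((L ⊕ Z) ⊕ U i)} {v w : L ⊕ L}
    (h : (labelGraph fun p : ι × ι => glue (F p.1) (F p.2)).Adj v w) :
    (labelGraph F).Adj (.inl (v.elim id id)) (.inl (w.elim id id)) := by
  obtain ⟨p, hp⟩ := labelGraph_adj.1 h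
  exact labelGraph_adj.2 ((adj_of_glue_adj_inl hp).elim (⟨_, ·⟩) (⟨_, ·⟩))

theorem colorable_labelGraph_glue {F : ∀ i, SimpleGraph ((L ⊕ Z) ⊕ U i)} {k : ℕ}
    (h : ((labelGraph F).comap Sum.inl).Colorable k) :
    (labelGraph fun p : ι × ι => glue (F p.1) (F p.2)).Colorable k :=
  h.of_hom ⟨Sum.elim id id, adj_of_labelGraph_glue_adj⟩

theorem exists_isIndepSet_colorable_induce_compl {V : Type*} {G : SimpleGraph V} {k : ℕ}
    (h : G.Colorable (k + 1)) : ∃ s : Set V, G.IsIndepSet s ∧ (G.induce sᶜ).Colorable k := by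
  obtain ⟨c⟩ := h
  refine ⟨c.colorClass (.last k), c.isIndepSet_colorClass _, ⟨.mk (fun v =>
    (c v).castPred v.2) fun {v w} hvw h => c.valid hvw ?_⟩⟩
  exact (Fin.castPred_inj).1 h

end LabelGraph

section QuantumGraph

variable {Ω : Type*} [MeasurableSpace Ω] (μ : Measure Ω) {S ι : Type*} [Fintype S] [Fintype ι]
  {U : ι → Type*} [∀ i, Fintype (U i)]

/-- The density function `∑ i, a i * t^k(F i, W)` of the labeled quantum graph `∑ i, a i • F i`. -/
def quantumDensity (W : Sym2 Ω → ℝ) (F : ∀ i, SimpleGraph (S ⊕ U i)) (a : ι → ℝ) (x : S → Ω) : ℝ :=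
  ∑ i, a i * labeledDensity μ W (F i) x

theorem quantumDensity_map_sumCongr {T : Type*} [Fintype T] (W : Sym2 Ω → ℝ) (e : S ≃ T)
    (F : ∀ i, SimpleGraph (S ⊕ U i)) (a : ι → ℝ) (x : T → Ω) :
    quantumDensity μ W (fun i => (F i).map (e.sumCongr (.refl (U i)))) a x =
      quantumDensity μ W F a (x ∘ e) := by
  simp only [quantumDensity, labeledDensity_map_sumCongr]

variable [IsFiniteMeasure μ] {W : Sym2 Ω → ℝ}

theorem bddMeasurable_quantumDensity (hW : BddMeasurable W) (F : ∀ i, SimpleGraph (S ⊕ U i))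
    (a : ι → ℝ) : BddMeasurable (quantumDensity μ W F a) :=
  .finsetSum fun i _ => (bddMeasurable_labeledDensity μ hW (F i)).const_mul (a i)

variable {L Z : Type*} [Fintype L] [Fintype Z]

theorem quantumDensity_glue (hW : BddMeasurable W) {F : ∀ i, SimpleGraph ((L ⊕ Z) ⊕ U i)}
    (hF : ∀ z z', ¬ (labelGraph F).Adj (.inr z) (.inr z')) (a : ι → ℝ) (w : L ⊕ L → Ω) :
    quantumDensity μ W (fun p : ι × ι => glue (F p.1) (F p.2)) (fun p => a p.1 * a p.2) w =
      ∫ z, quantumDensity μ W F a (Sum.elim (w ∘ Sum.inl) z) *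
        quantumDensity μ W F a (Sum.elim (w ∘ Sum.inr) z) ∂Measure.pi fun _ => μ := by
  have hdensity (u : L → Ω) (i : ι) :
      BddMeasurable fun z : Z → Ω => labeledDensity μ W (F i) (Sum.elim u z) :=
    (bddMeasurable_labeledDensity μ hW (F i)).comp
      (measurable_sumElim_pair.comp measurable_prodMk_left)
  have hindep (i : ι) (z z' : Z) : ¬ (F i).Adj (.inl (.inr z)) (.inl (.inr z')) :=
    fun h => hF z z' (labelGraph_adj.2 ⟨i, h⟩)
  simp only [quantumDensity, labeledDensity_glue μ hW (hindep _), Fintype.sum_mul_sum,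
    ← Fintype.sum_prod_type', mul_mul_mul_comm]
  rw [integral_finsetSum _ fun p _ => (((hdensity _ p.1).mul (hdensity _ p.2)).const_mul
    (a p.1 * a p.2)).integrable]
  simp only [integral_const_mul]

theorem ae_quantumDensity_glue_eq_zero_iff (hW : BddMeasurable W)
    {F : ∀ i, SimpleGraph ((L ⊕ Z) ⊕ U i)}
    (hF : ∀ z z', ¬ (labelGraph F).Adj (.inr z) (.inr z')) (a : ι → ℝ) :
    (∀ᵐ w ∂Measure.pi fun _ => μ,
        quantumDensity μ W (fun p : ι × ι => glue (F p.1) (F p.2)) (fun p => a p.1 * a p.2) w = 0) ↔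
      ∀ᵐ x ∂Measure.pi fun _ => μ, quantumDensity μ W F a x = 0 := by
  rw [ae_pi_sum_iff, ae_pi_sum_iff, ← ae_integral_mul_eq_zero_iff
    ((bddMeasurable_quantumDensity μ hW F a).comp measurable_sumElim_pair)]
  simp only [quantumDensity_glue μ hW hF, Sum.elim_comp_inl, Sum.elim_comp_inr]

end QuantumGraph

theorem exists_sum_density_eq_zero_iff_of_colorable {S : Type u} [Fintype S] {ι : Type v}
    [Fintype ι] {U : ι → Type u} [∀ i, Fintype (U i)] (F : ∀ i, SimpleGraph (S ⊕ U i))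
    (a : ι → ℝ) {k : ℕ} (hF : (labelGraph F).Colorable k) :
    ∃ (s : ℕ) (n : Fin s → ℕ) (G : ∀ j, SimpleGraph (Fin (n j))) (b : Fin s → ℝ),
      ∀ {Ω : Type w} [MeasurableSpace Ω] (μ : Measure Ω) [IsFiniteMeasure μ] {W : Sym2 Ω → ℝ},
        BddMeasurable W →
          (∑ j, b j * density μ W (G j) = 0 ↔
            ∀ᵐ x ∂Measure.pi fun _ => μ, quantumDensity μ W F a x = 0) := by
  induction k generalizing S ι with
  | zero =>
    have : IsEmpty S := hF.isEmpty
    let e (i : ι) : S ⊕ U i ≃ Fin (Fintype.card (U i)) :=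
      (Equiv.emptySum S (U i)).trans (Fintype.equivFin _)
    let r := Fintype.equivFin ι
    refine ⟨Fintype.card ι, fun j => Fintype.card (U (r.symm j)),
      fun j => (F (r.symm j)).map (e _), fun j => a (r.symm j), fun μ _ W _ => ?_⟩
    rw [r.symm.sum_comp fun i => a i * density μ W ((F i).map (e i))]
    simp only [quantumDensity, labeledDensity_eq_density_map μ W (e _)]
    rw [Measure.pi_of_empty]
    simp
  | succ k ih =>
    obtain ⟨Z, hZ, hcompl⟩ := exists_isIndepSet_colorable_induce_compl hF
    let e : S ≃ ↥Zᶜ ⊕ Z := (Equiv.sumComm _ _).trans (Equiv.Set.sumCompl Z) |>.symm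
    let F' (i : ι) : SimpleGraph ((↥Zᶜ ⊕ Z) ⊕ U i) := (F i).map (e.sumCongr (.refl (U i)))
    have hF' : labelGraph F' = (labelGraph F).comap e.symm := labelGraph_map_sumCongr e F
    have hindep (z z' : Z) : ¬ (labelGraph F').Adj (.inr z) (.inr z') := by
      rw [hF']
      exact fun h : (labelGraph F).Adj z z' => hZ z.2 z'.2 h.ne h
    have hcolorable : ((labelGraph F').comap Sum.inl).Colorable k := by
      rw [hF']
      exact hcompl
    obtain ⟨s, n, G, b, hG⟩ := ih (fun p : ι × ι => glue (F' p.1) (F' p.2))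
      (fun p => a p.1 * a p.2) (colorable_labelGraph_glue hcolorable)
    refine ⟨s, n, G, b, fun μ _ W hW => ?_⟩
    rw [hG μ hW, ae_quantumDensity_glue_eq_zero_iff μ hW hindep]
    simp only [F', quantumDensity_map_sumCongr]
    exact ae_pi_comp_equiv_iff μ e (p := fun y => quantumDensity μ W F a y = 0)

theorem statement1_general {S : Type u} [Fintype S] {ι : Type v} [Fintype ι] {U : ι → Type u}
    [∀ i, Fintype (U i)] (F : ∀ i, SimpleGraph (S ⊕ U i)) (a : ι → ℝ) :
    ∃ (s : ℕ) (n : Fin s → ℕ) (G : ∀ j, SimpleGraph (Fin (n j))) (b : Fin s → ℝ),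
      ∀ {Ω : Type w} [MeasurableSpace Ω] (μ : Measure Ω) [IsFiniteMeasure μ] {W : Sym2 Ω → ℝ},
        BddMeasurable W →
          (∑ j, b j * density μ W (G j) = 0 ↔
            ∀ᵐ x ∂Measure.pi fun _ => μ, ∑ i, a i * labeledDensity μ W (F i) x = 0) :=
  exists_sum_density_eq_zero_iff_of_colorable F a (labelGraph F).colorable_of_fintype

section UnitInterval

variable {W : ℝ → ℝ → ℝ} {k : ℕ}

/-- An element of `𝒲` as a function of unordered pairs of real numbers. Since `memW` constrains `W`
only on `[0,1]²`, both coordinates are first projected to `[0,1]`. -/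
def clampKernel (hW : memW W) : Sym2 ℝ → ℝ :=
  Sym2.lift ⟨fun x y => W (Set.projIcc 0 1 zero_le_one x) (Set.projIcc 0 1 zero_le_one y),
    fun _ _ => hW.2.1 _ (Subtype.prop _) _ (Subtype.prop _)⟩

theorem clampKernel_mk (hW : memW W) {x y : ℝ} (hx : x ∈ I01) (hy : y ∈ I01) :
    clampKernel hW s(x, y) = W x y := by
  simp [clampKernel, Set.projIcc_of_mem zero_le_one hx, Set.projIcc_of_mem zero_le_one hy]

theorem bddMeasurable_clampKernel (hW : memW W) : BddMeasurable (clampKernel hW) := by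
  obtain ⟨C, hC⟩ := hW.2.2
  have hproj : Measurable fun x : ℝ => (Set.projIcc 0 1 zero_le_one x : ℝ) :=
    (continuous_subtype_val.comp continuous_projIcc).measurable
  have hpair : Measurable fun p : ℝ × ℝ => clampKernel hW s(p.1, p.2) :=
    hW.1.comp ((hproj.comp measurable_fst).prodMk (hproj.comp measurable_snd))
  exact ⟨fun s hs => hpair hs, C,
    fun e => e.ind fun _ _ => hC _ (Subtype.prop _) _ (Subtype.prop _)⟩

instance isFiniteMeasure_restrict_I01 : IsFiniteMeasure (volume.restrict I01) :=
  inferInstanceAs (IsFiniteMeasure (volume.restrict (Set.Icc 0 1)))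

theorem volume_restrict_cube (k : ℕ) :
    volume.restrict (cube k) = Measure.pi fun _ => volume.restrict I01 := by
  rw [cube, volume_pi, Measure.restrict_pi_pi]

theorem ae_restrict_cube_mem (k : ℕ) : ∀ᵐ x ∂volume.restrict (cube k), x ∈ cube k :=
  ae_restrict_mem (.univ_pi fun _ => measurableSet_Icc)

theorem edgeProd_clampKernel (hW : memW W) (G : SimpleGraph (Fin k)) {x : Fin k → ℝ}
    (hx : x ∈ cube k) :
    edgeProd (clampKernel hW) G x =
      ∏ p : Fin k × Fin k with p.1 < p.2 ∧ G.Adj p.1 p.2, W (x p.1) (x p.2) := by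
  simp only [edgeProd_eq_prod_lt, clampKernel_mk hW (hx _ trivial) (hx _ trivial)]

theorem homDensity_eq_density (hW : memW W) (G : SimpleGraph (Fin k)) :
    homDensity G W = density (volume.restrict I01) (clampKernel hW) G := by
  rw [homDensity, density, ← volume_restrict_cube]
  refine integral_congr_ae ?_
  filter_upwards [ae_restrict_cube_mem k] with x hx using (edgeProd_clampKernel hW G hx).symm

theorem labDensity_eq_labeledDensity {m : ℕ} (hW : memW W) (F : SimpleGraph (Fin (k + m)))
    {x : Fin k → ℝ} (hx : x ∈ cube k) :
    labDensity F W x =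
      labeledDensity (volume.restrict I01) (clampKernel hW) (F.map finSumFinEquiv.symm) x := by
  rw [labDensity, labeledDensity, ← volume_restrict_cube]
  refine integral_congr_ae ?_
  filter_upwards [ae_restrict_cube_mem m] with y hy
  have happend : Fin.append x y ∈ cube (k + m) := fun i _ =>
    i.addCases (by simpa using (hx · trivial)) (by simpa using (hy · trivial))
  have hcomp : Sum.elim x y ∘ finSumFinEquiv.symm = Fin.append x y := by
    ext i
    refine i.addCases ?_ ?_ <;> simp
  rw [edgeProd_map _ _ finSumFinEquiv.symm.injective, hcomp, edgeProd_clampKernel hW F happend]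

theorem ae_sum_labDensity_eq_zero_iff {ι : Type*} [Fintype ι] {m : ι → ℕ} (hW : memW W)
    (F : ∀ i, SimpleGraph (Fin (k + m i))) (a : ι → ℝ) :
    (∀ᵐ x ∂volume.restrict (cube k), ∑ i, a i * labDensity (F i) W x = 0) ↔
      ∀ᵐ x ∂Measure.pi fun _ => volume.restrict I01, ∑ i, a i *
        labeledDensity (volume.restrict I01) (clampKernel hW) ((F i).map finSumFinEquiv.symm) x
          = 0 := by
  rw [← volume_restrict_cube]
  refine Filter.eventually_congr ?_
  filter_upwards [ae_restrict_cube_mem k] with x hx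
  simp only [labDensity_eq_labeledDensity hW _ hx]

end UnitInterval

/-- any finite linear condition on `k`-labeled densities holding almost
everywhere can be expressed by a single finite linear condition on (unlabeled)
homomorphism densities. -/
theorem statement1 (k : ℕ) (hk : 1 ≤ k) (M : ℕ) (m : Fin M → ℕ)
    (F : ∀ i, SimpleGraph (Fin (k + m i))) (a : Fin M → ℝ) :
    ∃ (s : ℕ) (n : Fin s → ℕ) (G : ∀ j, SimpleGraph (Fin (n j))) (b : Fin s → ℝ),
      ∀ W : ℝ → ℝ → ℝ, memW W →
        ((∑ j, b j * homDensity (G j) W) = 0 ↔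
          ∀ᵐ x ∂(volume.restrict (cube k)), (∑ i, a i * labDensity (F i) W x) = 0) := by
  obtain ⟨s, n, G, b, h⟩ := statement1_general (fun i => (F i).map finSumFinEquiv.symm) a
  refine ⟨s, n, G, b, fun W hW => ?_⟩
  simpa only [homDensity_eq_density hW, ae_sum_labDensity_eq_zero_iff hW] using
    h (volume.restrict I01) (bddMeasurable_clampKernel hW)
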